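/- Let a ~ N(0, I_n), x ∈ ℝⁿ a unit vector, and y = f(aᵀx) with E[y] and E[y(aᵀx)²] finite. Then E[y(a aᵀ − I_n)] = ν x xᵀ, where ν := Cov[y, (aᵀx)²]. -/

import Mathlib

open MeasureTheory ProbabilityTheory

/-- For `a ~ N(0, I_n)`, a unit vector `x` and `y = f(aᵀx)`, the matrix identity
`E[y (a aᵀ − I_n)] = ν x xᵀ` holds entrywise, where `ν := Cov[y, (aᵀx)²]`. -/
theorem stmt3 {Ω : Type*} [MeasureSpace Ω] [IsProbabilityMeasure (ℙ : Measure Ω)]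
    {n : ℕ} (a : Ω → (Fin n → ℝ)) (ha : Measurable a)
    (hlaw : Measure.map a ℙ = Measure.pi fun _ : Fin n => gaussianReal 0 1)
    (x : Fin n → ℝ) (hx : ∑ i, x i ^ 2 = 1)
    (f : ℝ → ℝ) (hf : Measurable f)
    (hy : Integrable (fun ω => f (∑ i, a ω i * x i)) ℙ)
    (hyS2 : Integrable (fun ω => f (∑ i, a ω i * x i) * (∑ i, a ω i * x i) ^ 2) ℙ)
    (hmom : ∀ i j : Fin n,
      Integrable (fun ω => f (∑ i', a ω i' * x i') * (a ω i * a ω j)) ℙ)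
    (ν : ℝ)
    (hν : ν = (∫ ω, f (∑ i, a ω i * x i) * (∑ i, a ω i * x i) ^ 2)
        - (∫ ω, f (∑ i, a ω i * x i)) * (∫ ω, (∑ i, a ω i * x i) ^ 2)) :
    ∀ i j : Fin n,
      (∫ ω, f (∑ i', a ω i' * x i') *
          (a ω i * a ω j - if i = j then (1 : ℝ) else 0))
        = ν * x i * x j := by
  set s : Ω → ℝ := fun ω => ∑ i, a ω i * x i with hs
  have hmi : ∀ i, Measurable (fun ω => a ω i) := fun i => (measurable_pi_apply i).comp ha
  have hmap : ∀ i, Measure.map (fun ω => a ω i) ℙ = gaussianReal 0 1 := by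
    intro i
    have h1 := Measure.map_map (μ := (ℙ : Measure Ω)) (measurable_pi_apply i) ha
    rw [hlaw, (measurePreserving_eval (fun _ : Fin n => gaussianReal 0 1) i).map_eq] at h1
    exact h1.symm
  have hG1 : ∀ i, HasGaussianLaw (fun ω => a ω i) (ℙ : Measure Ω) := fun i =>
    ⟨by rw [hmap i]; infer_instance⟩
  have hind : iIndepFun (fun i ω => a ω i) (ℙ : Measure Ω) := by
    rw [iIndepFun_iff_map_fun_eq_pi_map (fun i => (hmi i).aemeasurable)]
    simp_rw [hmap]
    exact hlaw
  have hG : HasGaussianLaw a (ℙ : Measure Ω) := hind.hasGaussianLaw hG1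
  have hL2 : ∀ i, MemLp (fun ω => a ω i) 2 (ℙ : Measure Ω) := fun i => (hG1 i).memLp_two
  have hmean : ∀ i, ∫ ω, a ω i = 0 := by
    intro i
    have h1 := integral_map (μ := (ℙ : Measure Ω)) (hmi i).aemeasurable
      (f := fun y : ℝ => y) (by fun_prop)
    rw [hmap i, integral_id_gaussianReal] at h1
    exact h1.symm
  have hcov : ∀ i j, cov[fun ω => a ω i, fun ω => a ω j; (ℙ : Measure Ω)]
      = if i = j then (1 : ℝ) else 0 := by
    intro i j
    split_ifs with hij
    · subst hij
      rw [covariance_self (hmi i).aemeasurable]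
      have h1 := variance_map (μ := (ℙ : Measure Ω)) (X := fun y : ℝ => y) (Y := fun ω => a ω i)
        (by fun_prop) (hmi i).aemeasurable
      rw [hmap i, variance_fun_id_gaussianReal] at h1
      simpa [Function.comp_def] using h1.symm
    · exact (hind.indepFun hij).covariance_eq_zero (hL2 i) (hL2 j)
  have hsm : Measurable s := by fun_prop
  have hL2c : ∀ i, MemLp (fun ω => a ω i * x i) 2 (ℙ : Measure Ω) := fun i =>
    (hL2 i).mul_const _
  have hsL2 : MemLp s 2 (ℙ : Measure Ω) := memLp_finsetSum _ fun i _ => hL2c i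
  have hcs : ∀ j, cov[s, fun ω => a ω j; (ℙ : Measure Ω)] = x j := by
    intro j
    rw [hs, covariance_fun_sum_left hL2c (hL2 j)]
    simp_rw [covariance_mul_const_left, hcov]
    simp
  have hcss : cov[s, s; (ℙ : Measure Ω)] = 1 := by
    conv_lhs => arg 2; rw [hs]
    rw [covariance_fun_sum_right hL2c hsL2]
    simp_rw [covariance_mul_const_right, hcs, ← hx, sq]
  have hsmean : ∫ ω, s ω = 0 := by
    rw [hs, integral_finsetSum _ fun i _ => (hL2c i).integrable (by norm_num)]
    simp [integral_mul_const, hmean]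
  set b : Fin n → Ω → ℝ := fun j ω => a ω j - s ω * x j with hb
  have hsx : ∀ j, MemLp (fun ω => s ω * x j) 2 (ℙ : Measure Ω) := fun j => hsL2.mul_const _
  have hbL2 : ∀ j, MemLp (b j) 2 (ℙ : Measure Ω) := fun j => (hL2 j).sub (hsx j)
  have hbm : ∀ j, Measurable (b j) := fun j => (hmi j).sub (hsm.mul_const _)
  have hcsb : ∀ j, cov[s, b j; (ℙ : Measure Ω)] = 0 := by
    intro j
    rw [hb, covariance_fun_sub_right hsL2 (hL2 j) (hsx j), covariance_mul_const_right, hcs, hcss]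
    ring
  have hbmean : ∀ j, ∫ ω, b j ω = 0 := by
    intro j
    simp only [hb]
    rw [integral_sub ((hL2 j).integrable (by norm_num)) ((hsx j).integrable (by norm_num)),
      integral_mul_const, hmean, hsmean]
    ring
  have hcbb : ∀ i j, cov[b i, b j; (ℙ : Measure Ω)]
      = (if i = j then (1 : ℝ) else 0) - x i * x j := by
    intro i j
    have h1 : cov[b i, b j; (ℙ : Measure Ω)] = cov[fun ω => a ω i - s ω * x i, b j; ℙ] := rfl
    rw [h1, covariance_fun_sub_left (hL2 i) (hsx i) (hbL2 j), covariance_mul_const_left, hcsb]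
    simp only [hb]
    rw [covariance_fun_sub_right (hL2 i) (hL2 j) (hsx j), covariance_mul_const_right, hcov,
      covariance_comm, hcs]
    ring
  have hEbb : ∀ i j, ∫ ω, b i ω * b j ω = (if i = j then (1 : ℝ) else 0) - x i * x j := by
    intro i j
    rw [← hcbb, covariance_eq_sub (hbL2 i) (hbL2 j), hbmean, hbmean]
    simp
  have hEss : ∫ ω, s ω ^ 2 = 1 := by
    rw [← hcss, covariance_eq_sub hsL2 hsL2, hsmean]
    simp [sq]
  -- joint Gaussianity and independence
  let S : (Fin n → ℝ) →L[ℝ] ℝ := ∑ i, x i • ContinuousLinearMap.proj (R := ℝ) i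
  have hS : ∀ v, S v = ∑ i, v i * x i := by
    intro v; simp [S, mul_comm]
  let L : (Fin n → ℝ) →L[ℝ] ((Unit → ℝ) × (Fin n → ℝ)) :=
    ContinuousLinearMap.prod (ContinuousLinearMap.pi fun _ => S)
      (ContinuousLinearMap.pi fun j => ContinuousLinearMap.proj (R := ℝ) j - x j • S)
  have hjoint : HasGaussianLaw (fun ω => ((fun _ : Unit => s ω), fun j => b j ω))
      (ℙ : Measure Ω) := by
    have h1 := hG.map_fun L
    have h2 : (fun ω => L (a ω)) = fun ω => ((fun _ : Unit => s ω), fun j => b j ω) := by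
      funext ω
      refine Prod.ext ?_ ?_
      · funext k
        simp [L, hS, hs]
      · funext k
        simp [L, hS, hs, hb, mul_comm]
    rw [h2] at h1
    exact h1
  have hI : IndepFun (fun ω (_ : Unit) => s ω) (fun ω j => b j ω) (ℙ : Measure Ω) :=
    HasGaussianLaw.indepFun_of_covariance_eval (X := fun _ : Unit => s) (Y := b) hjoint
      fun _ j => hcsb j
  have hfs : Integrable (fun ω => f (s ω) * s ω) ℙ := by
    refine (hy.norm.add hyS2.norm).mono' (by fun_prop) (Filter.Eventually.of_forall fun ω => ?_)
    simp only [Pi.add_apply, norm_mul, norm_pow, Real.norm_eq_abs]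
    have : |s ω| ≤ 1 + |s ω| ^ 2 := by nlinarith [sq_nonneg (|s ω| - 1)]
    nlinarith [mul_le_mul_of_nonneg_left this (abs_nonneg (f (s ω)))]
  have hI1 : ∀ j, IndepFun (fun ω => f (s ω) * s ω) (b j) (ℙ : Measure Ω) := fun j =>
    hI.comp (φ := fun u : Unit → ℝ => f (u ()) * u ()) (ψ := fun v : Fin n → ℝ => v j)
      (by fun_prop) (by fun_prop)
  have hI2 : ∀ i j, IndepFun (fun ω => f (s ω)) (fun ω => b i ω * b j ω) (ℙ : Measure Ω) :=
    fun i j => hI.comp (φ := fun u : Unit → ℝ => f (u ())) (ψ := fun v : Fin n → ℝ => v i * v j)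
      (by fun_prop) (by fun_prop)
  have hi1 : ∀ j, Integrable (fun ω => f (s ω) * s ω * b j ω) ℙ := fun j =>
    (hI1 j).integrable_mul hfs ((hbL2 j).integrable (by norm_num))
  have hbbi : ∀ i j, Integrable (fun ω => b i ω * b j ω) ℙ := fun i j =>
    (hbL2 i).integrable_mul (hbL2 j)
  have hi2 : ∀ i j, Integrable (fun ω => f (s ω) * (b i ω * b j ω)) ℙ := fun i j =>
    (hI2 i j).integrable_mul hy (hbbi i j)
  have he1 : ∀ j, ∫ ω, f (s ω) * s ω * b j ω = 0 := by
    intro j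
    rw [(hI1 j).integral_fun_mul_eq_mul_integral hfs.aestronglyMeasurable
      (hbm j).aestronglyMeasurable, hbmean, mul_zero]
  have he2 : ∀ i j, ∫ ω, f (s ω) * (b i ω * b j ω)
      = (∫ ω, f (s ω)) * ((if i = j then (1 : ℝ) else 0) - x i * x j) := by
    intro i j
    rw [(hI2 i j).integral_fun_mul_eq_mul_integral hy.aestronglyMeasurable
      (hbbi i j).aestronglyMeasurable, hEbb]
  intro i j
  set δ : ℝ := if i = j then (1 : ℝ) else 0 with hδ
  have hdec : ∀ ω, f (s ω) * (a ω i * a ω j - δ)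
      = (x i * x j) * (f (s ω) * s ω ^ 2) + x i * (f (s ω) * s ω * b j ω)
        + x j * (f (s ω) * s ω * b i ω) + f (s ω) * (b i ω * b j ω) - δ * f (s ω) := by
    intro ω
    simp only [hb]
    ring
  have t1 : Integrable (fun ω => (x i * x j) * (f (s ω) * s ω ^ 2)) ℙ :=
    hyS2.const_mul (x i * x j)
  have t2 := (hi1 j).const_mul (x i)
  have t3 := (hi1 i).const_mul (x j)
  have t4 := hi2 i j
  have t5 : Integrable (fun ω => δ * f (s ω)) ℙ :=
    hy.const_mul δ
  have t12 : Integrable (fun ω => (x i * x j) * (f (s ω) * s ω ^ 2) + x i * (f (s ω) * s ω * b j ω)) ℙ :=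
    t1.add t2
  have t123 : Integrable (fun ω => (x i * x j) * (f (s ω) * s ω ^ 2) + x i * (f (s ω) * s ω * b j ω) + x j * (f (s ω) * s ω * b i ω)) ℙ :=
    t12.add t3
  have t1234 : Integrable (fun ω => (x i * x j) * (f (s ω) * s ω ^ 2) + x i * (f (s ω) * s ω * b j ω) + x j * (f (s ω) * s ω * b i ω) + f (s ω) * (b i ω * b j ω)) ℙ :=
    t123.add t4
  change ∫ ω, f (s ω) * (a ω i * a ω j - δ) = _
  calc ∫ ω, f (s ω) * (a ω i * a ω j - δ)
      = ∫ ω, ((x i * x j) * (f (s ω) * s ω ^ 2) + x i * (f (s ω) * s ω * b j ω)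
        + x j * (f (s ω) * s ω * b i ω) + f (s ω) * (b i ω * b j ω) - δ * f (s ω)) :=
        integral_congr_ae (Filter.Eventually.of_forall hdec)
    _ = (x i * x j) * (∫ ω, f (s ω) * s ω ^ 2) + x i * (∫ ω, f (s ω) * s ω * b j ω)
        + x j * (∫ ω, f (s ω) * s ω * b i ω) + (∫ ω, f (s ω) * (b i ω * b j ω))
        - δ * ∫ ω, f (s ω) := by
        rw [integral_sub t1234 t5, integral_add t123 t4, integral_add t12 t3, integral_add t1 t2]
        simp only [integral_const_mul]
    _ = ν * x i * x j := by
        have hν' : ν = (∫ ω, f (s ω) * s ω ^ 2) - (∫ ω, f (s ω)) * (∫ ω, s ω ^ 2) := hν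
        rw [he1, he1, he2, hν', hEss]
        ring
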